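/- Let f(X) = a₀ + a₁X + ⋯ + a_tX^t ∈ ℤ[X] and let F : ℤ₂ → ℤ₂ denote the induced evaluation map on the ring ℤ₂ of 2-adic integers. Then F is ergodic with respect to the normalized Haar measure on the compact additive group ℤ₂ if and only if: (i) a₀ ≡ 1 (mod 2); (ii) a₁ ≡ 1 (mod 2); (iii) a₃ + a₅ + a₇ + ⋯ ≡ 2a₂ (mod 4); (iv) a₄ + a₆ + a₈ + ⋯ ≡ a₁ + a₂ − 1 (mod 4). -/

import Mathlib

open Polynomial MeasureTheory

/-- The sum of the odd-indexed coefficients `a₃ + a₅ + a₇ + ⋯` of `f`. -/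
noncomputable def oddCoeffSum (f : ℤ[X]) : ℤ :=
  ∑ i ∈ (Finset.range (f.natDegree + 1)).filter (fun i => Odd i ∧ 3 ≤ i), f.coeff i

/-- The sum of the even-indexed coefficients `a₄ + a₆ + a₈ + ⋯` of `f` with index ≥ 4. -/
noncomputable def evenCoeffSumFour (f : ℤ[X]) : ℤ :=
  ∑ i ∈ (Finset.range (f.natDegree + 1)).filter (fun i => Even i ∧ 4 ≤ i), f.coeff i

lemma coeff_as_sum (f : ℤ[X]) (j : ℕ) :
    f.coeff j = ∑ i ∈ Finset.range (f.natDegree + 1), if i = j then f.coeff i else 0 := by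
  rw [Finset.sum_ite_eq']
  split_ifs with h
  · rfl
  · apply Polynomial.coeff_eq_zero_of_natDegree_lt
    simp at h; omega

lemma zmod8_pow_odd (x : ZMod 8) (k : ℕ) : x ^ (2 * k + 3) = x ^ 3 := by
  induction k with
  | zero => rfl
  | succ k ih =>
    have h5 : ∀ x : ZMod 8, x ^ 3 * x ^ 2 = x ^ 3 := by decide
    calc x ^ (2 * (k + 1) + 3) = x ^ (2 * k + 3) * x ^ 2 := by ring
      _ = x ^ 3 := by rw [ih, h5]

lemma aeval_zmod8 (f : ℤ[X]) (x : ZMod 8) :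
    aeval x f = (f.coeff 0 : ZMod 8) + f.coeff 1 * x + f.coeff 2 * x ^ 2
      + oddCoeffSum f * x ^ 3 + evenCoeffSumFour f * x ^ 4 := by
  rw [aeval_eq_sum_range, oddCoeffSum, evenCoeffSumFour, coeff_as_sum f 0, coeff_as_sum f 1,
    coeff_as_sum f 2, Finset.sum_filter, Finset.sum_filter]
  push_cast
  simp only [Finset.sum_mul, ← Finset.sum_add_distrib]
  apply Finset.sum_congr rfl
  intro i _
  rcases Nat.lt_or_ge i 3 with h | h
  · interval_cases i <;> simp
  · rcases Nat.even_or_odd i with he | ho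
    · obtain ⟨k, rfl⟩ : ∃ k, i = 2 * k + 4 := by
        obtain ⟨m, rfl⟩ := he
        exact ⟨m - 2, by omega⟩
      have : x ^ (2 * k + 4) = x ^ 4 := by
        calc x ^ (2 * k + 4) = x ^ (2 * k + 3) * x := by ring
          _ = x ^ 4 := by rw [zmod8_pow_odd]; ring
      have h1 : ¬ Odd (2 * k + 4) := by simpa using he
      simp [he, h1, this]
    · obtain ⟨k, rfl⟩ : ∃ k, i = 2 * k + 3 := by
        obtain ⟨m, rfl⟩ := ho
        exact ⟨m - 1, by omega⟩
      have h1 : ¬ Even (2 * k + 3) := by simpa using ho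
      simp [ho, h1, zmod8_pow_odd]


/-- The quartic model of the reduction modulo `8`. -/
def P8 (a b c o e x : ZMod 8) : ZMod 8 := a + x * (b + x * (c + x * (o + x * e)))

/-- The same quartic, computed with natural numbers. -/
def Q8 (a b c o e x : ℕ) : ℕ := (a + x * (b + x * (c + x * (o + x * e)))) % 8

/-- Larin's conditions on residues. -/
def cond8 (a b c o e : ℕ) : Bool :=
  Nat.beq (4 * a % 8) 4 && (Nat.beq (4 * b % 8) 4 && (Nat.beq (2 * o % 8) (4 * c % 8) &&
    Nat.beq (2 * e % 8) (2 * (b + c + 7) % 8)))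

/-- Some short cycle exists modulo `2`, `4` or `8`. -/
def bad8 (a b c o e : ℕ) : Bool :=
  (List.range 8).any (fun x =>
    Nat.beq ((4 * Q8 a b c o e x + 4 * x) % 8) 0 ||
    (Nat.beq ((2 * Q8 a b c o e (Q8 a b c o e x) + 6 * x) % 8) 0 ||
     Nat.beq ((Q8 a b c o e (Q8 a b c o e (Q8 a b c o e (Q8 a b c o e x))) + 7 * x) % 8) 0))

/-- All cycles have the full length modulo `2`, `4` and `8`. -/
def good8 (a b c o e : ℕ) : Bool :=
  (List.range 8).all (fun x =>
    Nat.beq ((4 * Q8 a b c o e x + 4 * x) % 8) 4 &&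
    (Nat.beq ((2 * Q8 a b c o e (Q8 a b c o e x) + 6 * x) % 8) 4 &&
     Nat.beq ((Q8 a b c o e (Q8 a b c o e (Q8 a b c o e (Q8 a b c o e x))) + 7 * x) % 8) 4))

lemma all8 : (List.range 8).all (fun a => (List.range 8).all (fun b => (List.range 8).all (fun c =>
    (List.range 4).all (fun o => (List.range 4).all (fun e =>
      bif cond8 a b c o e then good8 a b c o e else bad8 a b c o e))))) = true := by
  decide +kernel

lemma nat8_eq (m n : ℕ) : Nat.beq (m % 8) n = true → ((m : ℕ) : ZMod 8) = n := by
  intro h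
  have := Nat.eq_of_beq_eq_true h
  rw [← this, ZMod.natCast_mod]

lemma cast_Q8 (a b c o e x : ℕ) : ((Q8 a b c o e x : ℕ) : ZMod 8) = P8 a b c o e x := by
  rw [Q8, ZMod.natCast_mod, P8]; push_cast; rfl

lemma cond8_iff (a b c o e : ℕ) : cond8 a b c o e = true ↔
    (4 * a = (4 : ZMod 8) ∧ 4 * b = (4 : ZMod 8) ∧ 2 * o = (4 * c : ZMod 8) ∧
      2 * e = (2 * (b + c - 1) : ZMod 8)) := by
  have h1 : (4 * a = (4 : ZMod 8)) ↔ (4 * a) % 8 = 4 % 8 := by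
    rw [← Nat.ModEq, ← ZMod.natCast_eq_natCast_iff]; push_cast; rfl
  have h2 : (4 * b = (4 : ZMod 8)) ↔ (4 * b) % 8 = 4 % 8 := by
    rw [← Nat.ModEq, ← ZMod.natCast_eq_natCast_iff]; push_cast; rfl
  have h3 : (2 * o = (4 * c : ZMod 8)) ↔ (2 * o) % 8 = (4 * c) % 8 := by
    rw [← Nat.ModEq, ← ZMod.natCast_eq_natCast_iff]; push_cast; rfl
  have h4 : (2 * e = (2 * (b + c - 1) : ZMod 8)) ↔ (2 * e) % 8 = (2 * (b + c + 7)) % 8 := by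
    rw [← Nat.ModEq, ← ZMod.natCast_eq_natCast_iff]; push_cast
    rw [show (b + c - 1 : ZMod 8) = b + c + 7 by
      rw [sub_eq_add_neg]; congr 1]
  rw [h1, h2, h3, h4]
  simp [cond8]

lemma p8_core (a b c : ZMod 8) (o e : ℕ) (ho : o < 4) (he : e < 4) :
    (4 * a = 4 ∧ 4 * b = 4 ∧ 2 * o = 4 * c ∧ 2 * e = 2 * (b + c - 1)) ∧
      (∀ x, 4 * (P8 a b c o e x - x) = 4 ∧ 2 * (P8 a b c o e (P8 a b c o e x) - x) = 4 ∧
      P8 a b c o e (P8 a b c o e (P8 a b c o e (P8 a b c o e x))) - x = 4) ∨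
    (¬ (4 * a = 4 ∧ 4 * b = 4 ∧ 2 * o = 4 * c ∧ 2 * e = 2 * (b + c - 1))) ∧
    (∃ x, 4 * (P8 a b c o e x - x) = 0 ∨ 2 * (P8 a b c o e (P8 a b c o e x) - x) = 0 ∨
      P8 a b c o e (P8 a b c o e (P8 a b c o e (P8 a b c o e x))) - x = 0) := by
  obtain ⟨a, ha, rfl⟩ : ∃ n : ℕ, n < 8 ∧ (n : ZMod 8) = a := ⟨a.val, a.val_lt, by simp⟩
  obtain ⟨b, hb, rfl⟩ : ∃ n : ℕ, n < 8 ∧ (n : ZMod 8) = b := ⟨b.val, b.val_lt, by simp⟩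
  obtain ⟨c, hc, rfl⟩ : ∃ n : ℕ, n < 8 ∧ (n : ZMod 8) = c := ⟨c.val, c.val_lt, by simp⟩
  have h := all8
  simp only [List.all_eq_true, List.mem_range] at h
  have h := h a ha b hb c hc o ho e he
  have e1 : ∀ x : ZMod 8, ∀ y : ZMod 8, 4 * (y - x) = 4 * y + 4 * x := by decide
  have e2 : ∀ x : ZMod 8, ∀ y : ZMod 8, 2 * (y - x) = 2 * y + 6 * x := by decide
  have e3 : ∀ x : ZMod 8, ∀ y : ZMod 8, y - x = y + 7 * x := by decide
  cases hcond : cond8 a b c o e with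
  | true =>
    left
    refine ⟨(cond8_iff a b c o e).1 hcond, fun x => ?_⟩
    obtain ⟨x, hx, rfl⟩ : ∃ n : ℕ, n < 8 ∧ (n : ZMod 8) = x := ⟨x.val, x.val_lt, by simp⟩
    rw [hcond, cond_true, good8] at h
    simp only [List.all_eq_true, List.mem_range, Bool.and_eq_true] at h
    obtain ⟨h1, h2, h3⟩ := h x hx
    have h1 := nat8_eq _ _ h1
    have h2 := nat8_eq _ _ h2
    have h3 := nat8_eq _ _ h3
    push_cast [cast_Q8] at h1 h2 h3
    rw [e1, e2, e3]
    exact ⟨h1, h2, h3⟩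
  | false =>
    right
    rw [hcond, cond_false, bad8] at h
    simp only [List.any_eq_true, List.mem_range, Bool.or_eq_true] at h
    obtain ⟨x, hx, h⟩ := h
    refine ⟨fun hh => (by rw [(cond8_iff a b c o e).2 hh] at hcond; cases hcond),
      (x : ZMod 8), ?_⟩
    rw [e1, e2, e3]
    rcases h with h | h | h
    · left; have h := nat8_eq _ _ h; push_cast [cast_Q8] at h; exact h
    · right; left; have h := nat8_eq _ _ h; push_cast [cast_Q8] at h; exact h
    · right; right; have h := nat8_eq _ _ h; push_cast [cast_Q8] at h; exact h

lemma exists_low (o : ZMod 8) : ∃ (n : ℕ) (d : ZMod 8), n < 4 ∧ o = n + 4 * d := by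
  refine ⟨o.val % 4, ((o.val / 4 : ℕ) : ZMod 8), Nat.mod_lt _ (by norm_num), ?_⟩
  conv_lhs => rw [← ZMod.natCast_zmod_val o, ← Nat.mod_add_div o.val 4]
  push_cast; rfl

lemma p8_dich (a b c o e : ZMod 8) :
    (4 * a = 4 ∧ 4 * b = 4 ∧ 2 * o = 4 * c ∧ 2 * e = 2 * (b + c - 1)) ∧
      (∀ x, 4 * (P8 a b c o e x - x) = 4 ∧ 2 * (P8 a b c o e (P8 a b c o e x) - x) = 4 ∧
      P8 a b c o e (P8 a b c o e (P8 a b c o e (P8 a b c o e x))) - x = 4) ∨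
    (¬ (4 * a = 4 ∧ 4 * b = 4 ∧ 2 * o = 4 * c ∧ 2 * e = 2 * (b + c - 1))) ∧
    (∃ x, 4 * (P8 a b c o e x - x) = 0 ∨ 2 * (P8 a b c o e (P8 a b c o e x) - x) = 0 ∨
      P8 a b c o e (P8 a b c o e (P8 a b c o e (P8 a b c o e x))) - x = 0) := by
  obtain ⟨o, d, ho, rfl⟩ := exists_low o
  obtain ⟨e, g, he, rfl⟩ := exists_low e
  have h8 : (8 : ZMod 8) = 0 := by decide
  have h3 : ∀ x : ZMod 8, 4 * x ^ 3 = 4 * x := by decide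
  have h4 : ∀ x : ZMod 8, 4 * x ^ 4 = 4 * x ^ 2 := by decide
  have hP : P8 a b c (o + 4 * d) (e + 4 * g) = P8 a (b + 4 * d) (c + 4 * g) o e := by
    funext x
    simp only [P8]
    linear_combination d * h3 x + g * h4 x
  have c1 : 4 * (b + 4 * d) = 4 * b := by linear_combination 2 * d * h8
  have c2 : 2 * ((o : ZMod 8) + 4 * d) = 2 * o := by linear_combination d * h8
  have c3 : 4 * (c + 4 * g) = 4 * c := by linear_combination 2 * g * h8
  have c4 : 2 * ((e : ZMod 8) + 4 * g) = 2 * e := by linear_combination g * h8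
  have c5 : 2 * (b + 4 * d + (c + 4 * g) - 1) = 2 * (b + c - 1) := by
    linear_combination (d + g) * h8
  have h := p8_core a (b + 4 * d) (c + 4 * g) o e ho he
  rw [c1, c3, c5] at h
  rw [hP, c2, c4]
  exact h

lemma deriv_mod_four (f : ℤ[X]) (x y : ℤ) (h : 2 ∣ y - x) :
    4 ∣ f.derivative.eval y - f.derivative.eval x := by
  obtain ⟨t, ht⟩ := h
  obtain rfl : y = x + 2 * t := by linarith
  obtain ⟨k, hk⟩ := binomExpansion f.derivative x (2 * t)
  have h2 : derivative (derivative f) = 2 • hasseDeriv 2 f := by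
    have := congrFun (factorial_smul_hasseDeriv (R := ℤ) 2) f
    simpa using this.symm
  rw [hk, h2]
  refine ⟨(hasseDeriv 2 f).eval x * t + k * t ^ 2, ?_⟩
  simp only [nsmul_eq_mul, eval_mul]
  simp
  ring

lemma deriv_odd (f : ℤ[X]) (h2 : ∀ x, 4 ∣ f.eval (f.eval x) - x - 2) (x : ℤ) :
    f.derivative.eval x % 2 = 1 := by
  by_contra hne
  have hev : 2 ∣ f.derivative.eval x := by omega
  obtain ⟨m, hm⟩ := hev
  obtain ⟨k, hk⟩ := binomExpansion f x 2
  have h4 : (4 : ℤ) ∣ f.eval (x + 2) - f.eval x := ⟨m + k, by rw [hk, hm]; ring⟩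
  have h5 := h4.trans (sub_dvd_eval_sub (f.eval (x + 2)) (f.eval x) f)
  have := h2 x
  have := h2 (x + 2)
  omega

lemma iter_two_pow (f : ℤ[X]) (h1 : ∀ x, 2 ∣ f.eval x - x - 1)
    (h2 : ∀ x, 4 ∣ f.eval (f.eval x) - x - 2)
    (h4 : ∀ x, 8 ∣ f.eval (f.eval (f.eval (f.eval x))) - x - 4) (k : ℕ) :
    ∃ g : ℤ[X], (∀ x, g.eval x = (fun y => f.eval y)^[2 ^ (k + 2)] x) ∧
      (∀ x, (2 : ℤ) ^ (k + 3) ∣ g.eval x - x - 2 ^ (k + 2)) ∧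
      ∀ x, 4 ∣ g.derivative.eval x - 1 := by
  induction k with
  | zero =>
    refine ⟨f.comp (f.comp (f.comp f)), fun x => by simp, fun x => by simpa using h4 x,
      fun x => ?_⟩
    simp only [derivative_comp, eval_mul, eval_comp]
    set d := f.derivative
    have o1 := deriv_odd f h2 x
    have o2 := deriv_odd f h2 (f.eval x)
    have e1 : 4 ∣ d.eval (f.eval (f.eval x)) - d.eval x :=
      deriv_mod_four f _ _ (by have := h2 x; omega)
    have e2 : 4 ∣ d.eval (f.eval (f.eval (f.eval x))) - d.eval (f.eval x) :=
      deriv_mod_four f _ _ (by have := h2 (f.eval x); omega)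
    change d.eval x % 2 = 1 at o1
    change d.eval (f.eval x) % 2 = 1 at o2
    obtain ⟨s, hs⟩ := e1
    obtain ⟨t, ht⟩ := e2
    rw [show d.eval (f.eval (f.eval x)) = d.eval x + 4 * s by linarith,
      show d.eval (f.eval (f.eval (f.eval x))) = d.eval (f.eval x) + 4 * t by linarith]
    obtain ⟨u, hu⟩ : ∃ u, d.eval x = 2 * u + 1 := ⟨d.eval x / 2, by omega⟩
    obtain ⟨v, hv⟩ : ∃ v, d.eval (f.eval x) = 2 * v + 1 := ⟨d.eval (f.eval x) / 2, by omega⟩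
    rw [hu, hv]
    refine ⟨((u * u + u) * ((2 * v + 1) * (2 * v + 1)) + v * v + v) +
      (2 * u + 1) * (2 * v + 1) * (s * (2 * v + 1) + t * (2 * u + 1) + 4 * s * t), ?_⟩
    ring
  | succ k ih =>
    obtain ⟨g, hg, hx, hd⟩ := ih
    refine ⟨g.comp g, fun x => ?_, fun x => ?_, fun x => ?_⟩
    · rw [eval_comp, hg, hg, ← Function.iterate_add_apply]
      congr 1; ring
    · rw [eval_comp]
      obtain ⟨c, hc⟩ := hx x
      obtain ⟨m, hm⟩ := hd x
      obtain ⟨r, hr⟩ := binomExpansion g x (2 ^ (k + 2) * (1 + 2 * c))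
      have hgx : g.eval x = x + 2 ^ (k + 2) * (1 + 2 * c) := by
        have : (2 : ℤ) ^ (k + 3) = 2 * 2 ^ (k + 2) := by ring
        rw [this] at hc; linarith
      have hm' : g.derivative.eval x = 1 + 4 * m := by linarith
      rw [hm', hgx] at hr
      rw [hgx, hr]
      refine ⟨c + m * (1 + 2 * c) + r * 2 ^ k * (1 + 2 * c) ^ 2, ?_⟩
      ring
    · rw [derivative_comp, eval_mul, eval_comp]
      obtain ⟨m, hm⟩ := hd x
      obtain ⟨m', hm'⟩ := hd (g.eval x)
      rw [show g.derivative.eval x = 1 + 4 * m by linarith,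
        show g.derivative.eval (g.eval x) = 1 + 4 * m' by linarith]
      exact ⟨m + m' + 4 * m * m', by ring⟩

lemma iter_all (f : ℤ[X]) (h1 : ∀ x, 2 ∣ f.eval x - x - 1)
    (h2 : ∀ x, 4 ∣ f.eval (f.eval x) - x - 2)
    (h4 : ∀ x, 8 ∣ f.eval (f.eval (f.eval (f.eval x))) - x - 4) (n : ℕ) (x : ℤ) :
    (2 : ℤ) ^ (n + 1) ∣ (fun y => f.eval y)^[2 ^ n] x - x - 2 ^ n := by
  match n with
  | 0 => simpa using h1 x
  | 1 => simpa using h2 x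
  | k + 2 =>
    obtain ⟨g, hg, hx, -⟩ := iter_two_pow f h1 h2 h4 k
    rw [← hg]; exact hx x

lemma transitive_mod (f : ℤ[X])
    (H : ∀ (n : ℕ) (x : ℤ), (2 : ℤ) ^ (n + 1) ∣ (fun y => f.eval y)^[2 ^ n] x - x - 2 ^ n)
    (n : ℕ) (x y : ℤ) : ∃ k, (2 : ℤ) ^ n ∣ (fun y => f.eval y)^[k] x - y := by
  induction n with
  | zero => exact ⟨0, by simp⟩
  | succ n ih =>
    obtain ⟨k, c, hc⟩ := ih
    rcases Int.even_or_odd' c with ⟨d, rfl | rfl⟩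
    · exact ⟨k, d, by rw [hc]; ring⟩
    · refine ⟨2 ^ n + k, ?_⟩
      rw [Function.iterate_add_apply]
      obtain ⟨e, he⟩ := H n ((fun y => f.eval y)^[k] x)
      refine ⟨e + d + 1, ?_⟩
      have : (fun y => f.eval y)^[2 ^ n] ((fun y => f.eval y)^[k] x) - y =
        ((fun y => f.eval y)^[2 ^ n] ((fun y => f.eval y)^[k] x) -
          (fun y => f.eval y)^[k] x - 2 ^ n) + ((fun y => f.eval y)^[k] x - y) + 2 ^ n := by ring
      rw [this, he, hc]; ring

lemma cast_iter (f : ℤ[X]) (R : Type*) [CommRing R] (k : ℕ) (x : ℤ) :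
    (((fun y => f.eval y)^[k] x : ℤ) : R) = (fun y : R => aeval y f)^[k] (x : R) := by
  induction k generalizing x with
  | zero => rfl
  | succ k ih =>
    rw [Function.iterate_succ_apply, Function.iterate_succ_apply, ih]
    congr 1
    simp [aeval_def, eval₂_at_intCast]


/-- Cylinder sets. -/
def cyl (n : ℕ) (a : ZMod (2 ^ n)) : Set ℤ_[2] := {z | PadicInt.toZModPow n z = a}

lemma cyl_eq_ball (n : ℕ) (w : ℤ_[2]) :
    cyl n (PadicInt.toZModPow n w) = Metric.closedBall w ((2 : ℝ) ^ (-(n : ℤ))) := by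
  ext z
  have := PadicInt.norm_le_pow_iff_mem_span_pow (p := 2) (z - w) n
  rw [← PadicInt.ker_toZModPow, RingHom.mem_ker, map_sub, sub_eq_zero] at this
  rw [Metric.mem_closedBall, dist_eq_norm]
  exact this.symm

lemma toZModPow_surj (n : ℕ) (a : ZMod (2 ^ n)) : ∃ x : ℤ, PadicInt.toZModPow (p := 2) n x = a := by
  obtain ⟨x, hx⟩ := ZMod.intCast_surjective a
  exact ⟨x, by rw [map_intCast, hx]⟩

lemma isOpen_cyl (n : ℕ) (a : ZMod (2 ^ n)) : IsOpen (cyl n a) := by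
  obtain ⟨x, rfl⟩ := toZModPow_surj n a
  rw [cyl_eq_ball]
  exact IsUltrametricDist.isOpen_closedBall _ (by positivity)

lemma cyl_inter {n m : ℕ} (h : n ≤ m) (z w : ℤ_[2])
    (hz : PadicInt.toZModPow m z = PadicInt.toZModPow m w) :
    PadicInt.toZModPow n z = PadicInt.toZModPow n w := by
  rw [← PadicInt.cast_toZModPow n m h, ← PadicInt.cast_toZModPow n m h, hz]

lemma cyl_pi : IsPiSystem {s | ∃ n a, s = cyl n a} := by
  rintro _ ⟨n, a, rfl⟩ _ ⟨m, b, rfl⟩ ⟨w, hw1, hw2⟩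
  rcases le_total n m with h | h
  · refine ⟨m, b, Set.inter_eq_right.2 fun z hz => ?_⟩
    exact (cyl_inter h z w (Eq.trans hz (Eq.symm hw2))).trans hw1
  · refine ⟨n, a, Set.inter_eq_left.2 fun z hz => ?_⟩
    exact (cyl_inter h z w (Eq.trans hz (Eq.symm hw1))).trans hw2

lemma cyl_basis : TopologicalSpace.IsTopologicalBasis {s | ∃ n a, s = cyl n a} := by
  apply TopologicalSpace.isTopologicalBasis_of_isOpen_of_nhds
  · rintro _ ⟨n, a, rfl⟩; exact isOpen_cyl n a
  · intro w U hw hU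
    obtain ⟨ε, hε, hs⟩ := Metric.isOpen_iff.1 hU w hw
    obtain ⟨n, hn⟩ := exists_pow_lt_of_lt_one hε (show (2⁻¹ : ℝ) < 1 by norm_num)
    refine ⟨_, ⟨n, PadicInt.toZModPow n w, rfl⟩, rfl, ?_⟩
    rw [cyl_eq_ball]
    refine (Metric.closedBall_subset_ball ?_).trans hs
    simpa using hn

section
variable [MeasurableSpace ℤ_[2]] [BorelSpace ℤ_[2]]

lemma meas_eq (ν ν' : Measure ℤ_[2]) [IsFiniteMeasure ν] [IsFiniteMeasure ν']
    (h : ∀ n a, ν (cyl n a) = ν' (cyl n a)) : ν = ν' := by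
  refine ext_of_generate_finite _ ?_ cyl_pi ?_ ?_
  · rw [BorelSpace.measurable_eq (α := ℤ_[2])]; exact cyl_basis.borel_eq_generateFrom
  · rintro _ ⟨n, a, rfl⟩; exact h n a
  · have : (Set.univ : Set ℤ_[2]) = cyl 0 0 := by
      ext z; simp only [Set.mem_univ, cyl, Set.mem_ofPred_eq, true_iff]
      exact Subsingleton.elim (α := ZMod 1) _ _
    rw [this]; exact h _ _

lemma meas_univ (ν : Measure ℤ_[2]) (n : ℕ) (a : ZMod (2 ^ n))
    (h : ∀ a b, ν (cyl n a) = ν (cyl n b)) : ν Set.univ = (2 ^ n : ENNReal) * ν (cyl n a) := by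
  have hU : (Set.univ : Set ℤ_[2]) = ⋃ a ∈ (Finset.univ : Finset (ZMod (2 ^ n))), cyl n a := by
    ext z; simp [cyl]
  rw [hU, measure_biUnion_finset]
  · rw [Finset.sum_congr rfl (fun b _ => h b a)]
    simp [ZMod.card]
  · intro a _ b _ hab
    refine Set.disjoint_left.2 fun z hz hz' => hab ?_
    exact Eq.trans (Eq.symm hz) hz'
  · intro b _; exact (isOpen_cyl n b).measurableSet

lemma haar_cyl (μ : Measure ℤ_[2]) [μ.IsAddHaarMeasure] (n : ℕ) (a b : ZMod (2 ^ n)) :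
    μ (cyl n a) = μ (cyl n b) := by
  obtain ⟨x, hx⟩ := toZModPow_surj n (b - a)
  have : cyl n a = (fun z => (x : ℤ_[2]) + z) ⁻¹' cyl n b := by
    ext z
    simp only [cyl, Set.mem_ofPred_eq, Set.mem_preimage, map_add, hx]
    constructor
    · rintro rfl; ring
    · intro h; linear_combination h
  rw [this, measure_preimage_add]

lemma unif_eq (μ : Measure ℤ_[2]) [μ.IsAddHaarMeasure] [IsProbabilityMeasure μ]
    (ν : Measure ℤ_[2]) [IsFiniteMeasure ν]
    (h : ∀ n a b, ν (cyl n a) = ν (cyl n b)) : ν = ν Set.univ • μ := by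
  have : IsFiniteMeasure (ν Set.univ • μ) := ⟨by simp⟩
  apply meas_eq
  intro n a
  have h1 := meas_univ ν n a (h n)
  have h2 := meas_univ μ n a (haar_cyl μ n)
  rw [measure_univ] at h2
  rw [Measure.smul_apply, smul_eq_mul, h1]
  rw [mul_right_comm, ← h2, one_mul]

lemma toZModPow_aeval (f : ℤ[X]) (n : ℕ) (z : ℤ_[2]) :
    PadicInt.toZModPow n (aeval z f) = aeval (PadicInt.toZModPow n z) f := by
  simp only [aeval_def, hom_eval₂]
  congr 1
  exact RingHom.ext_int _ _

lemma ergodic_of_transitive (f : ℤ[X]) (μ : Measure ℤ_[2]) [μ.IsAddHaarMeasure]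
    [IsProbabilityMeasure μ]
    (H : ∀ n (a b : ZMod (2 ^ n)), ∃ k, (fun y => aeval y f)^[k] a = b) :
    Ergodic (fun w : ℤ_[2] => aeval w f) μ := by
  have hm : Measurable (fun w : ℤ_[2] => aeval w f) := (f.continuous_aeval).measurable
  have hbij : ∀ n, Function.Bijective (fun y : ZMod (2 ^ n) => aeval y f) := by
    intro n
    apply Function.Surjective.bijective_of_finite
    intro b
    obtain ⟨k, hk⟩ := H n (aeval (0 : ZMod (2 ^ n)) f) b
    refine ⟨(fun y => aeval y f)^[k] 0, ?_⟩
    rw [← hk]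
    exact (Function.iterate_succ_apply' _ k (0 : ZMod (2 ^ n))).symm.trans
      (Function.iterate_succ_apply (fun y : ZMod (2 ^ n) => aeval y f) k 0)
  have hpre : ∀ n (a : ZMod (2 ^ n)),
      (fun w : ℤ_[2] => aeval w f) ⁻¹' cyl n (aeval a f) = cyl n a := by
    intro n a
    ext z
    simp only [cyl, Set.mem_preimage, Set.mem_ofPred_eq, toZModPow_aeval]
    exact (hbij n).1.eq_iff
  have hmp : MeasurePreserving (fun w : ℤ_[2] => aeval w f) μ μ := by
    refine ⟨hm, ?_⟩
    have : IsProbabilityMeasure (μ.map (fun w : ℤ_[2] => aeval w f)) :=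
      Measure.isProbabilityMeasure_map hm.aemeasurable
    have := unif_eq μ (μ.map (fun w : ℤ_[2] => aeval w f)) (by
      intro n a b
      obtain ⟨a, rfl⟩ := (hbij n).2 a
      obtain ⟨b, rfl⟩ := (hbij n).2 b
      rw [Measure.map_apply hm (isOpen_cyl _ _).measurableSet,
        Measure.map_apply hm (isOpen_cyl _ _).measurableSet]
      simp only [hpre]
      exact haar_cyl μ n a b)
    rw [measure_univ, one_smul] at this
    exact this
  refine ⟨hmp, ⟨?_⟩⟩
  intro A hA hinv
  have hstep : ∀ n (a : ZMod (2 ^ n)), μ.restrict A (cyl n (aeval a f)) = μ.restrict A (cyl n a) := by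
    intro n a
    rw [Measure.restrict_apply (isOpen_cyl _ _).measurableSet,
      Measure.restrict_apply (isOpen_cyl _ _).measurableSet,
      ← hmp.measure_preimage ((isOpen_cyl _ _).measurableSet.inter hA).nullMeasurableSet,
      Set.preimage_inter, hpre, hinv]
  have hit : ∀ n k (a : ZMod (2 ^ n)),
      μ.restrict A (cyl n ((fun y => aeval y f)^[k] a)) = μ.restrict A (cyl n a) := by
    intro n k
    induction k with
    | zero => intro a; rfl
    | succ k ih => intro a; rw [Function.iterate_succ_apply, ih, hstep]
  have := unif_eq μ (μ.restrict A) (by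
    intro n a b
    obtain ⟨k, rfl⟩ := H n a b
    exact (hit n k a).symm)
  have h2 := congrArg (fun ν => ν Aᶜ) this
  simp only [Measure.restrict_apply hA.compl, Set.compl_inter_self, measure_empty,
    Measure.restrict_apply_univ, Measure.smul_apply, smul_eq_mul] at h2
  rw [Filter.eventuallyConst_set']
  rcases mul_eq_zero.1 h2.symm with h | h
  · left; exact ae_eq_empty.2 h
  · right; exact ae_eq_univ.2 h

lemma no_short_cycle (f : ℤ[X]) (μ : Measure ℤ_[2]) [μ.IsAddHaarMeasure]
    [IsProbabilityMeasure μ] (he : Ergodic (fun w : ℤ_[2] => aeval w f) μ)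
    (n j : ℕ) (hj : 0 < j) (hjn : j < 2 ^ n) (a : ZMod (2 ^ n))
    (hc : (fun y => aeval y f)^[j] a = a) : False := by
  classical
  let S : Finset (ZMod (2 ^ n)) := (Finset.range j).image (fun i => (fun y => aeval y f)^[i] a)
  have hSc : S.card < Fintype.card (ZMod (2 ^ n)) := by
    rw [ZMod.card]
    exact lt_of_le_of_lt (Finset.card_image_le.trans (by simp)) hjn
  have hclosed : ∀ s ∈ S, aeval s f ∈ S := by
    intro s hs
    obtain ⟨i, hi, rfl⟩ := Finset.mem_image.1 hs
    have hi := Finset.mem_range.1 hi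
    have e : aeval ((fun y => aeval y f)^[i] a) f = (fun y => aeval y f)^[i + 1] a :=
      (Function.iterate_succ_apply' (fun y => aeval y f) i a).symm
    rw [e]
    rcases Nat.lt_or_ge (i + 1) j with h | h
    · exact Finset.mem_image.2 ⟨i + 1, Finset.mem_range.2 h, rfl⟩
    · have : i + 1 = j := by omega
      rw [this, hc]
      exact Finset.mem_image.2 ⟨0, Finset.mem_range.2 hj, rfl⟩
  obtain ⟨b, hb⟩ : ∃ b, b ∉ S := by
    by_contra! hall
    exact hSc.ne (Finset.card_eq_iff_eq_univ S |>.2 (Finset.eq_univ_iff_forall.2 hall))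
  have haS : a ∈ S := Finset.mem_image.2 ⟨0, Finset.mem_range.2 hj, rfl⟩
  let A : Set ℤ_[2] := ⋃ s ∈ S, cyl n s
  have hAo : IsOpen A := isOpen_biUnion fun s _ => isOpen_cyl n s
  have hmem : ∀ z, z ∈ A ↔ PadicInt.toZModPow n z ∈ S := by
    intro z; simp [A, cyl]
  have hpos : ∀ c : ZMod (2 ^ n), μ (cyl n c) ≠ 0 := by
    intro c
    obtain ⟨x, hx⟩ := toZModPow_surj n c
    exact (isOpen_cyl n c).measure_ne_zero μ ⟨x, hx⟩
  rcases he.ae_empty_or_univ_of_ae_le_preimage (s := A) hAo.measurableSet.nullMeasurableSet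
    (Filter.Eventually.of_forall (fun z hz => by
      have hz' : z ∈ A := hz
      change aeval z f ∈ A
      rw [hmem, toZModPow_aeval]
      exact hclosed _ ((hmem z).1 hz'))) with h | h
  · rw [ae_eq_empty] at h
    refine hpos a (measure_mono_null (fun z hz => (hmem z).2 ?_) h)
    have : PadicInt.toZModPow n z = a := hz
    rw [this]; exact haS
  · rw [ae_eq_univ] at h
    refine hpos b (measure_mono_null (fun z hz => ?_) h)
    have : PadicInt.toZModPow n z = b := hz
    intro hzA
    rw [hmem, this] at hzA
    exact hb hzA
end


lemma z8_iff (m n : ℤ) : ((m : ℤ) : ZMod 8) = ((n : ℤ) : ZMod 8) ↔ 8 ∣ n - m := by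
  simpa using ZMod.intCast_eq_intCast_iff_dvd_sub m n 8

lemma eval_cast8 (f : ℤ[X]) (x : ℤ) :
    ((f.eval x : ℤ) : ZMod 8) = P8 (f.coeff 0) (f.coeff 1) (f.coeff 2) (oddCoeffSum f)
      (evenCoeffSumFour f) (x : ZMod 8) := by
  have h := cast_iter f (ZMod 8) 1 x
  simp only [Function.iterate_one] at h
  rw [h, aeval_zmod8, P8]; ring

lemma cond_iff (f : ℤ[X]) :
      (f.coeff 0 ≡ 1 [ZMOD 2] ∧
       f.coeff 1 ≡ 1 [ZMOD 2] ∧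
       oddCoeffSum f ≡ 2 * f.coeff 2 [ZMOD 4] ∧
       evenCoeffSumFour f ≡ f.coeff 1 + f.coeff 2 - 1 [ZMOD 4]) ↔
    (4 * (f.coeff 0 : ZMod 8) = 4 ∧ 4 * (f.coeff 1 : ZMod 8) = 4 ∧
      2 * (oddCoeffSum f : ZMod 8) = 4 * (f.coeff 2 : ZMod 8) ∧
      2 * (evenCoeffSumFour f : ZMod 8) = 2 * ((f.coeff 1 : ZMod 8) + (f.coeff 2 : ZMod 8) - 1)) := by
  have h1 := z8_iff (4 * f.coeff 0) 4
  have h2 := z8_iff (4 * f.coeff 1) 4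
  have h3 := z8_iff (2 * oddCoeffSum f) (4 * f.coeff 2)
  have h4 := z8_iff (2 * evenCoeffSumFour f) (2 * (f.coeff 1 + f.coeff 2 - 1))
  push_cast at h1 h2 h3 h4
  rw [h1, h2, h3, h4]
  simp only [Int.ModEq]
  omega


/-- The evaluation map `F : ℤ₂ → ℤ₂` of `f = a₀ + a₁ X + ⋯ + a_t X^t ∈ ℤ[X]` on the
`2`-adic integers is ergodic with respect to the normalized Haar measure `μ` on the compact
additive group `ℤ₂` if and only if `a₀ ≡ 1 (mod 2)`, `a₁ ≡ 1 (mod 2)`,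
`a₃ + a₅ + ⋯ ≡ 2 a₂ (mod 4)`, and `a₄ + a₆ + ⋯ ≡ a₁ + a₂ - 1 (mod 4)`. -/
theorem ergodic_iff_larin_conditions (f : ℤ[X])
    [MeasurableSpace ℤ_[2]] [BorelSpace ℤ_[2]]
    (μ : Measure ℤ_[2]) (hμ : μ.IsAddHaarMeasure) (hprob : IsProbabilityMeasure μ) :
    Ergodic (fun w : ℤ_[2] => aeval w f) μ ↔
      (f.coeff 0 ≡ 1 [ZMOD 2] ∧
       f.coeff 1 ≡ 1 [ZMOD 2] ∧
       oddCoeffSum f ≡ 2 * f.coeff 2 [ZMOD 4] ∧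
       evenCoeffSumFour f ≡ f.coeff 1 + f.coeff 2 - 1 [ZMOD 4]) := by
  rw [cond_iff]
  have hev := eval_cast8 f
  have dich := p8_dich (f.coeff 0) (f.coeff 1) (f.coeff 2) (oddCoeffSum f) (evenCoeffSumFour f)
  set P := P8 (f.coeff 0) (f.coeff 1) (f.coeff 2) (oddCoeffSum f) (evenCoeffSumFour f) with hP
  constructor
  · intro he
    rcases dich with h | ⟨-, x, hx⟩
    · exact h.1
    · exfalso
      obtain ⟨x, rfl⟩ := ZMod.intCast_surjective x
      have key : ∀ n j : ℕ, 0 < j → j < 2 ^ n → ¬ ((2 : ℤ) ^ n ∣ (fun y => f.eval y)^[j] x - x) := by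
        intro n j hj hjn hd
        refine no_short_cycle f μ he n j hj hjn (x : ZMod (2 ^ n)) ?_
        rw [← cast_iter]
        symm
        rw [ZMod.intCast_eq_intCast_iff_dvd_sub]
        simpa using hd
      rcases hx with hx | hx | hx
      · have h1 := z8_iff (4 * (f.eval x - x)) 0
        push_cast [hev] at h1
        have h1 := h1.1 hx
        refine key 1 1 (by norm_num) (by norm_num) ?_
        simp only [Function.iterate_succ_apply, Function.iterate_zero_apply]
        omega
      · have h1 := z8_iff (2 * (f.eval (f.eval x) - x)) 0
        push_cast [hev] at h1
        have h1 := h1.1 hx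
        refine key 2 2 (by norm_num) (by norm_num) ?_
        simp only [Function.iterate_succ_apply, Function.iterate_zero_apply]
        omega
      · have h1 := z8_iff (f.eval (f.eval (f.eval (f.eval x))) - x) 0
        push_cast [hev] at h1
        have h1 := h1.1 hx
        refine key 3 4 (by norm_num) (by norm_num) ?_
        simp only [Function.iterate_succ_apply, Function.iterate_zero_apply]
        omega
  · intro hc
    rcases dich with ⟨-, h⟩ | ⟨h, -⟩
    swap
    · exact absurd hc h
    apply ergodic_of_transitive
    intro n a b
    obtain ⟨x, rfl⟩ := ZMod.intCast_surjective a
    obtain ⟨y, rfl⟩ := ZMod.intCast_surjective b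
    have H := iter_all f
      (fun x => by
        have h1 := z8_iff (4 * (f.eval x - x)) 4
        push_cast [hev] at h1
        have h1 := h1.1 (h x).1
        omega)
      (fun x => by
        have h1 := z8_iff (2 * (f.eval (f.eval x) - x)) 4
        push_cast [hev] at h1
        have h1 := h1.1 (h x).2.1
        omega)
      (fun x => by
        have h1 := z8_iff (f.eval (f.eval (f.eval (f.eval x))) - x) 4
        push_cast [hev] at h1
        have h1 := h1.1 (h x).2.2
        omega)
    obtain ⟨k, hk⟩ := transitive_mod f H n x y
    refine ⟨k, ?_⟩
    rw [← cast_iter]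
    symm
    rw [ZMod.intCast_eq_intCast_iff_dvd_sub]
    simpa using hk
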